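/- For every integer r ≥ 2 and every integer i, the generalized cluster variables satisfy X(i, r) = X(i+1, r-2) + 2 in the field ℚ(x_1,…,x_r). -/

import Mathlib

/-- The ambient field `ℚ(x_1, …, x_r)`, realized as the fraction field of the
polynomial ring over `ℚ` in variables indexed by `ZMod r` (so indices are
automatically read modulo `r`). -/
noncomputable abbrev CyclicField (r : ℕ) : Type :=
  FractionRing (MvPolynomial (ZMod r) ℚ)

/-- The variable `x_i` for `i : ℤ`, with `x_{i+r} = x_i`. -/
noncomputable def xv (r : ℕ) (i : ℤ) : CyclicField r :=
  algebraMap (MvPolynomial (ZMod r) ℚ) (CyclicField r) (MvPolynomial.X (i : ZMod r))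

/-- The generalized cluster variable `X(l, n)` (the image of the indecomposable
nilpotent representation `E_l[n]` under the Caldero–Chapoton map):
`X(l,0) = 1` and, for `n ≥ 1`,
`X(l,n) = x_{l+n}/x_l + Σ_{k=1}^{n-1} (x_{l+n}·x_{l+r-1})/(x_{l+k-1}·x_{l+k}) + x_{l+r-1}/x_{l+n-1}`. -/
noncomputable def Xgcv (r : ℕ) (l : ℤ) : ℕ → CyclicField r
  | 0 => 1
  | n + 1 =>
      xv r (l + n + 1) / xv r l
        + ∑ k ∈ Finset.Icc 1 n,
            (xv r (l + n + 1) * xv r (l + r - 1)) / (xv r (l + k - 1) * xv r (l + k))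
        + xv r (l + r - 1) / xv r (l + n)

/-!
Allowing the summation index to take the values `k = 0` and `k = n` absorbs the two outer summands
of `X(l, n)`, because `x_{l+r-1} = x_{l-1}`:
`X(l, n) = x_{l-1} x_{l+n} ∑_{k=0}^{n} 1 / (x_{l+k-1} x_{l+k})`, also for `n = 0`.
By periodicity `X(i, r)` and `X(i+1, r-2)` have the same prefactor `x_{i-1} x_i`, and the sum for
`X(i, r)` exceeds the sum for `X(i+1, r-2)` exactly by its terms `k = 0` and `k = r`. Both of these
are `1 / (x_{i-1} x_i)`, so each contributes `1`.
-/

/-- The generalized cluster variable `X(l, n)` evaluated at an arbitrary nowhere vanishing sequence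
`x`, with its outer summands written as the terms `k = 0` and `k = n` of the sum. The number of
vertices `r` does not enter: `x (l - 1)` stands for `x_{l+r-1}`. -/
def gcv {K : Type*} [Semifield K] (x : ℤ → K) (l : ℤ) (n : ℕ) : K :=
  x (l - 1) * x (l + n) * ∑ k ∈ Finset.range (n + 1), (x (l + k - 1) * x (l + k))⁻¹

section Semifield

variable {K : Type*} [Semifield K] {x : ℤ → K}

theorem gcv_zero {l : ℤ} (hpred : x (l - 1) ≠ 0) (hl : x l ≠ 0) : gcv x l 0 = 1 := by
  simpa only [gcv, zero_add, Finset.sum_range_one, Nat.cast_zero, add_zero]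
    using mul_inv_cancel₀ (mul_ne_zero hpred hl)

theorem gcv_succ {l : ℤ} {n : ℕ} (hpred : x (l - 1) ≠ 0) (hlast : x (l + n + 1) ≠ 0) :
    gcv x l (n + 1) =
      x (l + n + 1) / x l
        + x (l - 1) * x (l + n + 1) * ∑ k ∈ Finset.range n, (x (l + k) * x (l + k + 1))⁻¹
        + x (l - 1) / x (l + n) := by
  have hfirst_term : x (l - 1) * x (l + n + 1) * (x (l - 1) * x l)⁻¹ = x (l + n + 1) / x l := by
    rw [← div_eq_mul_inv, mul_div_mul_left _ _ hpred]
  have hlast_term :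
      x (l - 1) * x (l + n + 1) * (x (l + n) * x (l + n + 1))⁻¹ = x (l - 1) / x (l + n) := by
    rw [← div_eq_mul_inv, mul_div_mul_right _ _ hlast]
  rw [gcv, Finset.sum_range_succ, Finset.sum_range_succ']
  simp only [Nat.cast_add, Nat.cast_one, Nat.cast_zero, add_zero, ← add_assoc,
    add_sub_cancel_right, mul_add, hfirst_term, hlast_term]
  ring

theorem stmt7_general {r : ℕ} (hr : 2 ≤ r) (hper : Function.Periodic x r) (hx : ∀ j, x j ≠ 0)
    (i : ℤ) : gcv x i r = gcv x (i + 1) (r - 2) + 2 := by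
  obtain ⟨n, rfl⟩ := Nat.exists_eq_add_of_le' hr
  have hlast : x (i + (n + 1 : ℕ) + 1) = x i := by
    rw [← hper i]
    congr 1
    push_cast
    ring
  have hpenult : x (i + (n + 1 : ℕ)) = x (i - 1) := by
    rw [← hper (i - 1)]
    congr 1
    push_cast
    ring
  have hinner :
      x (i - 1) * x i * ∑ k ∈ Finset.range (n + 1), (x (i + k) * x (i + k + 1))⁻¹ =
        gcv x (i + 1) n := by
    have hindex (k : ℤ) : i + 1 + k = i + k + 1 := by ring
    rw [← hpenult]
    simp only [gcv, hindex, add_sub_cancel_right, Nat.cast_add, Nat.cast_one, ← add_assoc,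
      mul_comm (x i)]
  calc gcv x i (n + 2)
      = x i / x i + gcv x (i + 1) n + x (i - 1) / x (i - 1) := by
        rw [gcv_succ (hx _) (hx _), hlast, hpenult, hinner]
    _ = gcv x (i + 1) n + 2 := by
        rw [div_self (hx i), div_self (hx (i - 1)), add_comm 1, add_assoc, one_add_one_eq_two]

end Semifield

theorem xv_ne_zero (r : ℕ) (i : ℤ) : xv r i ≠ 0 :=
  (FaithfulSMul.algebraMap_eq_zero_iff _ _).not.mpr (MvPolynomial.X_ne_zero _)

theorem xv_periodic (r : ℕ) : Function.Periodic (xv r) r := fun i => by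
  simp [xv]

theorem Xgcv_eq_gcv (r : ℕ) (l : ℤ) (n : ℕ) : Xgcv r l n = gcv (xv r) l n := by
  cases n with
  | zero => rw [Xgcv, gcv_zero (xv_ne_zero r _) (xv_ne_zero r _)]
  | succ n =>
    have hpred : xv r (l + r - 1) = xv r (l - 1) := by
      rw [← xv_periodic r (l - 1), sub_add_eq_add_sub]
    have hterm (k : ℕ) :
        xv r (l + n + 1) * xv r (l - 1) / (xv r (l + (1 + k : ℕ) - 1) * xv r (l + (1 + k : ℕ))) =
          xv r (l - 1) * xv r (l + n + 1) * (xv r (l + k) * xv r (l + k + 1))⁻¹ := by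
      have hindex : l + (1 + k : ℕ) = l + k + 1 := by push_cast; ring
      rw [hindex, add_sub_cancel_right, mul_comm (xv r (l + n + 1)), div_eq_mul_inv]
    rw [Xgcv, gcv_succ (xv_ne_zero r _) (xv_ne_zero r _), hpred, Finset.mul_sum,
      ← Finset.Ico_add_one_right_eq_Icc, Finset.sum_Ico_eq_sum_range, add_tsub_cancel_right]
    simp only [hterm]

/-- `X(i, r) = X(i+1, r-2) + 2` for every `r ≥ 2` and every integer `i`. -/
theorem stmt7 (r : ℕ) (hr : 2 ≤ r) (i : ℤ) :
    Xgcv r i r = Xgcv r (i + 1) (r - 2) + 2 := by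
  simpa only [Xgcv_eq_gcv] using stmt7_general hr (xv_periodic r) (xv_ne_zero r) i
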